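/- Under a scaling of the heterogeneous key predistribution model with on/off channels satisfying the scaling condition Λ_1(n) = α_n λ_1(n) = c_n (log n)/n with lim_{n→∞} c_n = c, if c < 1 then the probability that the random graph G(n; μ, K_n, P_n, α_n) is connected tends to 0 as n → ∞. -/

import Mathlib

/-!
The graph is shown to have, with probability tending to one, an isolated vertex of the first class.
Let `X` be the number of such vertices and `Λ = α λ₁`. Given the key ring of a first-class vertex,
every other vertex is adjacent to it independently with probability `Λ`, so
`E X = n μ₁ (1 - Λ)^(n-1)` (`expect_isoInd`), which tends to infinity like `n^(1-c)`.
Since `X = 0` on connected graphs, Chebyshev's inequality (`pr_connected_le`) reduces the claim to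
asymptotic independence of the isolation events of two first-class vertices `x`, `y`.

Given rings `S`, `T` of `x`, `y`, a third vertex is adjacent to neither with probability
`1 - 2Λ + α² q`, where `q` is the probability that its ring meets both `S` and `T`
(`expect_isoInd_mul_le`).

* If `S` and `T` are disjoint, meeting `S` and meeting `T` are negatively correlated for each class
  of the third vertex, whence `q ≤ ∑ μ_j p_{1j}² ≤ λ₁² / μ_r`, and `n α² q = O(n Λ²)` vanishes.
* If they intersect, which has probability `p₁₁ ≤ λ₁`, only `q ≤ λ₁` is used, so that the
  correlation is at most about `n^(α c)`. For `α ≤ 1 / log² n` this factor tends to one; for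
  `α > 1 / log² n` one has `p₁₁ ≤ Λ / α ≤ log³ n / n`, which beats the factor `n^c` as `c < 1`.

`pair_ratio_le` combines the cases and `pr_connected_le_error` gives the resulting explicit bound.
Probabilities are finite sums over configurations; independence enters through the factorization
of sums of products (`sum_channel`, `sum_pin_one`, `sum_pin_two`).
-/

open Filter

/-- Probability that a uniformly random `b`-subset of a `P`-set avoids a fixed `a`-subset. -/
noncomputable def avoidProb (P a b : ℕ) : ℝ := ((P - a).choose b : ℝ) / (P.choose b : ℝ)

/-- `p_{ab}` : probability that independent uniformly random key rings of sizes
`a` and `b` (from a pool of size `P`) intersect. -/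
noncomputable def pEdge (P a b : ℕ) : ℝ := 1 - avoidProb P a b

/-- `λ_i` : mean edge probability of a class-`i` node in the inhomogeneous random key graph. -/
noncomputable def lamb {r : ℕ} (μ : Fin (r + 1) → ℝ) (K : Fin (r + 1) → ℕ) (P : ℕ)
    (i : Fin (r + 1)) : ℝ :=
  ∑ j, μ j * pEdge P (K i) (K j)

/-- A configuration of the model: a class for each vertex, a key ring for each vertex,
and an on/off state for each (unordered) channel. -/
abbrev Config (n r P : ℕ) := (Fin n → Fin (r + 1)) × (Fin n → Finset (Fin P)) × (Sym2 (Fin n) → Bool)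

/-- Probability weight of a configuration: classes are i.i.d. with law `μ`; given its class `i`,
a vertex's key ring is uniform among the `C(P, K i)` subsets of size `K i`; channels over
distinct pairs are i.i.d. Bernoulli(`α`) (diagonal channel variables are forced to `false`). -/
noncomputable def wt {n r P : ℕ} (μ : Fin (r + 1) → ℝ) (K : Fin (r + 1) → ℕ) (α : ℝ)
    (c : Config n r P) : ℝ :=
  (∏ x : Fin n, μ (c.1 x)) *
    (∏ x : Fin n, if (c.2.1 x).card = K (c.1 x) then ((P.choose (K (c.1 x)) : ℝ))⁻¹ else 0) *
    (∏ e : Sym2 (Fin n),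
      if e.IsDiag then (if c.2.2 e then 0 else 1) else (if c.2.2 e then α else 1 - α))

open Classical in
/-- Probability of an event under the heterogeneous key predistribution model
with on/off channels. -/
noncomputable def pr {n r P : ℕ} (μ : Fin (r + 1) → ℝ) (K : Fin (r + 1) → ℕ) (α : ℝ)
    (E : Config n r P → Prop) : ℝ :=
  ∑ c : Config n r P, if E c then wt μ K α c else 0

/-- Two vertices are adjacent iff their key rings intersect and the channel between them is on. -/
def Adj {n r P : ℕ} (c : Config n r P) (x y : Fin n) : Prop :=
  x ≠ y ∧ ((c.2.1 x) ∩ (c.2.1 y)).Nonempty ∧ c.2.2 s(x, y) = true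

/-- The random graph `G(n; μ, K, P, α)` as a simple graph. -/
def graphOf {n r P : ℕ} (c : Config n r P) : SimpleGraph (Fin n) :=
  SimpleGraph.fromRel (fun x y => ((c.2.1 x) ∩ (c.2.1 y)).Nonempty ∧ c.2.2 s(x, y) = true)

/-- A vertex is isolated if it has no neighbours. -/
def Isolated {n r P : ℕ} (c : Config n r P) (x : Fin n) : Prop := ∀ y, ¬ Adj c x y

/-- The graph has no isolated nodes. -/
def NoIsolatedNodes {n r P : ℕ} (c : Config n r P) : Prop := ∀ x, ¬ Isolated c x

/-! ### Expectations as sums of products -/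

/-- Joint weight of the class and the key ring of a single vertex. -/
noncomputable def vertexWt {r P : ℕ} (μ : Fin (r + 1) → ℝ) (K : Fin (r + 1) → ℕ)
    (v : Fin (r + 1) × Finset (Fin P)) : ℝ :=
  μ v.1 * (if v.2.card = K v.1 then ((P.choose (K v.1) : ℝ))⁻¹ else 0)

/-- Weight of the state `b` of the channel `e`. -/
noncomputable def channelWt {n : ℕ} (α : ℝ) (e : Sym2 (Fin n)) (b : Bool) : ℝ :=
  if e.IsDiag then (if b then 0 else 1) else (if b then α else 1 - α)

/-- The configuration with vertex data (class, key ring) `ω` and channel states `B`. -/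
def toConfig {n r P : ℕ} (ω : Fin n → Fin (r + 1) × Finset (Fin P)) (B : Sym2 (Fin n) → Bool) :
    Config n r P :=
  (fun x => (ω x).1, fun x => (ω x).2, B)

/-- Expectation of a real function of the configuration. -/
noncomputable def expect {n r P : ℕ} (μ : Fin (r + 1) → ℝ) (K : Fin (r + 1) → ℕ) (α : ℝ)
    (f : Config n r P → ℝ) : ℝ :=
  ∑ c : Config n r P, wt μ K α c * f c

lemma expect_eq {n r P : ℕ} (μ : Fin (r + 1) → ℝ) (K : Fin (r + 1) → ℕ) (α : ℝ)
    (f : Config n r P → ℝ) :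
    expect μ K α f = ∑ ω : Fin n → Fin (r + 1) × Finset (Fin P), (∏ z, vertexWt μ K (ω z)) *
      ∑ B : Sym2 (Fin n) → Bool, (∏ e, channelWt α e (B e)) * f (toConfig ω B) := by
  unfold expect
  rw [← Equiv.sum_comp (Equiv.prodAssoc _ _ _), Fintype.sum_prod_type,
    ← Equiv.sum_comp (Equiv.arrowProdEquivProdArrow (Fin n) (fun _ => Fin (r + 1))
      (fun _ => Finset (Fin P)))]
  refine Finset.sum_congr rfl fun ω _ => ?_
  rw [Finset.mul_sum]
  refine Finset.sum_congr rfl fun B _ => ?_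
  simp only [wt, vertexWt, channelWt, toConfig, Equiv.prodAssoc, Equiv.arrowProdEquivProdArrow,
    Equiv.coe_fn_mk, Finset.prod_mul_distrib]
  exact mul_assoc _ _ _

open Classical in
/-- Integrating out the channels: each forbidden channel contributes a factor `1 - α`. -/
lemma sum_channel {n : ℕ} (α : ℝ) (bad : Sym2 (Fin n) → Prop) (hbad : ∀ e, bad e → ¬ e.IsDiag) :
    ∑ B : Sym2 (Fin n) → Bool, (∏ e, channelWt α e (B e)) *
      (if ∀ e, bad e → B e = false then 1 else 0) = ∏ e, if bad e then 1 - α else 1 := by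
  have h1 : ∀ B : Sym2 (Fin n) → Bool, (if ∀ e, bad e → B e = false then (1 : ℝ) else 0)
      = ∏ e, if bad e ∧ B e = true then 0 else 1 := by
    intro B
    split_ifs with h
    · refine (Finset.prod_eq_one fun e _ => ?_).symm
      rw [if_neg]
      rintro ⟨h2, h3⟩
      simp [h e h2] at h3
    · push Not at h
      obtain ⟨e, he, he'⟩ := h
      refine (Finset.prod_eq_zero (Finset.mem_univ e) ?_).symm
      rw [if_pos]
      exact ⟨he, by simpa using he'⟩
  simp_rw [h1, ← Finset.prod_mul_distrib]
  rw [← Fintype.prod_sum fun e b => channelWt α e b * (if bad e ∧ b = true then 0 else 1)]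
  refine Finset.prod_congr rfl fun e _ => ?_
  have := hbad e
  by_cases h : bad e <;> by_cases h' : e.IsDiag <;> simp_all [channelWt]

/-- Conditioning on the data of one vertex makes the other vertices independent. -/
lemma sum_pin_one {n : ℕ} {V : Type*} [Fintype V] [DecidableEq V] (x : Fin n) (φ : V → ℝ)
    (h : V → V → ℝ) :
    ∑ ω : Fin n → V, φ (ω x) * ∏ z ∈ Finset.univ.erase x, h (ω x) (ω z)
      = ∑ a, φ a * (∑ b, h a b) ^ (n - 1) := by
  have h1 : ∀ a, φ a * (∑ b, h a b) ^ (n - 1)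
      = ∑ ω : Fin n → V, if ω x = a then φ a * ∏ z ∈ Finset.univ.erase x, h a (ω z) else 0 := by
    intro a
    have h2 := Fintype.prod_sum fun (z : Fin n) (b : V) =>
      if z = x then (if b = a then φ a else 0) else h a b
    rw [← Finset.mul_prod_erase _ _ (Finset.mem_univ x)] at h2
    have h3 : ∏ z ∈ Finset.univ.erase x, ∑ b, (if z = x then (if b = a then φ a else 0) else h a b)
        = (∑ b, h a b) ^ (n - 1) := by
      rw [Finset.prod_congr rfl (g := fun _ => ∑ b, h a b)]
      · simp
      · intro z hz
        simp [Finset.ne_of_mem_erase hz]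
    rw [h3] at h2
    simp only [if_true, Finset.sum_ite_eq', Finset.mem_univ] at h2
    rw [h2]
    refine Finset.sum_congr rfl fun ω _ => ?_
    rw [← Finset.mul_prod_erase _ _ (Finset.mem_univ x),
      Finset.prod_congr rfl (g := fun z => h a (ω z))]
    · by_cases h4 : ω x = a <;> simp [h4]
    · intro z hz
      simp [Finset.ne_of_mem_erase hz]
  simp_rw [h1]
  rw [Finset.sum_comm]
  exact Finset.sum_congr rfl fun ω _ => by simp

/-- Conditioning on the data of two vertices makes the other vertices independent. -/
lemma sum_pin_two {n : ℕ} {V : Type*} [Fintype V] [DecidableEq V] (x y : Fin n) (hxy : x ≠ y)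
    (φ : V → V → ℝ) (h : V → V → V → ℝ) :
    ∑ ω : Fin n → V, φ (ω x) (ω y) *
        ∏ z ∈ (Finset.univ.erase x).erase y, h (ω x) (ω y) (ω z)
      = ∑ a, ∑ b, φ a b * (∑ v, h a b v) ^ (n - 2) := by
  have hy : y ∈ Finset.univ.erase x := Finset.mem_erase.2 ⟨hxy.symm, Finset.mem_univ y⟩
  have h1 : ∀ a b, φ a b * (∑ v, h a b v) ^ (n - 2)
      = ∑ ω : Fin n → V, if ω x = a then (if ω y = b then
          φ a b * ∏ z ∈ (Finset.univ.erase x).erase y, h a b (ω z) else 0) else 0 := by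
    intro a b
    have h2 := Fintype.prod_sum fun (z : Fin n) (v : V) =>
      if z = x then (if v = a then φ a b else 0) else
        if z = y then (if v = b then 1 else 0) else h a b v
    rw [← Finset.mul_prod_erase _ _ (Finset.mem_univ x), ← Finset.mul_prod_erase _ _ hy] at h2
    have h3 : ∏ z ∈ (Finset.univ.erase x).erase y,
        ∑ v, (if z = x then (if v = a then φ a b else 0) else
          if z = y then (if v = b then 1 else 0) else h a b v)
        = (∑ v, h a b v) ^ (n - 2) := by
      rw [Finset.prod_congr rfl (g := fun _ => ∑ v, h a b v)]
      · simp [Finset.card_erase_of_mem hy, Nat.sub_sub]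
      · intro z hz
        rw [Finset.mem_erase, Finset.mem_erase] at hz
        simp [hz.1, hz.2.1]
    rw [h3] at h2
    simp only [if_true, Finset.sum_ite_eq', Finset.mem_univ, if_neg hxy.symm, one_mul] at h2
    rw [h2]
    refine Finset.sum_congr rfl fun ω _ => ?_
    rw [← Finset.mul_prod_erase _ _ (Finset.mem_univ x), ← Finset.mul_prod_erase _ _ hy,
      Finset.prod_congr rfl (g := fun z => h a b (ω z))]
    · by_cases h4 : ω x = a <;> by_cases h5 : ω y = b <;> simp [h4, h5, hxy.symm]
    · intro z hz
      rw [Finset.mem_erase, Finset.mem_erase] at hz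
      simp [hz.1, hz.2.1]
  simp_rw [h1]
  rw [Finset.sum_congr rfl fun a _ => Finset.sum_comm, Finset.sum_comm]
  refine Finset.sum_congr rfl fun ω _ => ?_
  rw [Finset.sum_eq_single (ω x) (fun a _ ha => by simp [ha.symm]) (by simp)]
  simp

/-! ### Avoidance probabilities -/

lemma avoidProb_nonneg (P a b : ℕ) : 0 ≤ avoidProb P a b := by
  unfold avoidProb; positivity

lemma avoidProb_le_one (P a b : ℕ) : avoidProb P a b ≤ 1 := by
  unfold avoidProb
  refine div_le_one_of_le₀ ?_ (by positivity)
  exact_mod_cast Nat.choose_le_choose b (Nat.sub_le P a)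

lemma avoidProb_zero {P b : ℕ} (h : b ≤ P) : avoidProb P 0 b = 1 := by
  have : (0 : ℝ) < P.choose b := by exact_mod_cast Nat.choose_pos h
  simp [avoidProb, this.ne']

lemma pEdge_nonneg (P a b : ℕ) : 0 ≤ pEdge P a b := sub_nonneg.2 (avoidProb_le_one P a b)

lemma pEdge_le_one (P a b : ℕ) : pEdge P a b ≤ 1 := by
  have := avoidProb_nonneg P a b
  unfold pEdge; linarith

lemma avoidProb_succ_le {P b : ℕ} (a : ℕ) (h : b + 1 ≤ P) :
    avoidProb P a (b + 1) ≤ avoidProb P a b := by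
  have h1 : (0 : ℝ) < P.choose b := by exact_mod_cast Nat.choose_pos (by omega)
  have h2 : (0 : ℝ) < P.choose (b + 1) := by exact_mod_cast Nat.choose_pos h
  unfold avoidProb
  rw [div_le_div_iff₀ h2 h1]
  have key : (P - a).choose (b + 1) * P.choose b ≤ (P - a).choose b * P.choose (b + 1) := by
    refine Nat.le_of_mul_le_mul_right (c := b + 1) ?_ (Nat.succ_pos b)
    calc (P - a).choose (b + 1) * P.choose b * (b + 1)
        = (P - a).choose (b + 1) * (b + 1) * P.choose b := by ring
      _ = (P - a).choose b * P.choose b * (P - a - b) := by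
          rw [Nat.choose_succ_right_eq]; ring
      _ ≤ (P - a).choose b * P.choose b * (P - b) := by gcongr; omega
      _ = (P - a).choose b * (P.choose (b + 1) * (b + 1)) := by
          rw [Nat.choose_succ_right_eq P b]; ring
      _ = _ := by ring
  exact_mod_cast key

lemma pEdge_mono {P b b' : ℕ} (a : ℕ) (hb : b ≤ b') (h : b' ≤ P) :
    pEdge P a b ≤ pEdge P a b' := by
  induction b', hb using Nat.le_induction with
  | base => exact le_rfl
  | succ m hm ih =>
    have h1 := ih (by omega)
    have h2 := avoidProb_succ_le a h
    unfold pEdge at *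
    linarith

lemma choose_mul_choose_le (P a b : ℕ) :
    (P - 2 * a).choose b * P.choose b ≤ (P - a).choose b * (P - a).choose b := by
  induction b with
  | zero => simp
  | succ b ih =>
    refine Nat.le_of_mul_le_mul_right (c := (b + 1) * (b + 1)) ?_ (by positivity)
    have hfac : (P - 2 * a - b) * (P - b) ≤ (P - a - b) * (P - a - b) := by
      by_cases h : 2 * a + b ≤ P
      · obtain ⟨d, rfl⟩ := Nat.exists_eq_add_of_le h
        have e1 : 2 * a + b + d - 2 * a - b = d := by omega
        have e2 : 2 * a + b + d - b = 2 * a + d := by omega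
        have e3 : 2 * a + b + d - a - b = a + d := by omega
        rw [e1, e2, e3]
        nlinarith [sq_nonneg a]
      · have : P - 2 * a - b = 0 := by omega
        simp [this]
    calc (P - 2 * a).choose (b + 1) * P.choose (b + 1) * ((b + 1) * (b + 1))
        = ((P - 2 * a).choose (b + 1) * (b + 1)) * (P.choose (b + 1) * (b + 1)) := by ring
      _ = ((P - 2 * a).choose b * P.choose b) * ((P - 2 * a - b) * (P - b)) := by
          rw [Nat.choose_succ_right_eq, Nat.choose_succ_right_eq]; ring
      _ ≤ ((P - a).choose b * (P - a).choose b) * ((P - a - b) * (P - a - b)) := by gcongr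
      _ = ((P - a).choose b * (P - a - b)) * ((P - a).choose b * (P - a - b)) := by ring
      _ = ((P - a).choose (b + 1) * (b + 1)) * ((P - a).choose (b + 1) * (b + 1)) := by
          rw [Nat.choose_succ_right_eq]
      _ = _ := by ring

/-- Avoiding two disjoint rings of size `a` are negatively correlated events. -/
lemma avoidProb_two_mul_le {P b : ℕ} (a : ℕ) (h : b ≤ P) :
    avoidProb P (2 * a) b ≤ avoidProb P a b ^ 2 := by
  have h1 : (0 : ℝ) < P.choose b := by exact_mod_cast Nat.choose_pos h
  have h2 : ((P - 2 * a).choose b : ℝ) * P.choose b ≤ (P - a).choose b * (P - a).choose b := by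
    exact_mod_cast choose_mul_choose_le P a b
  unfold avoidProb
  rw [div_pow, div_le_div_iff₀ h1 (by positivity)]
  nlinarith

section Mean

variable {r : ℕ} {μ : Fin (r + 1) → ℝ} {K : Fin (r + 1) → ℕ} {P : ℕ}

lemma lamb_nonneg (hμ : ∀ i, 0 < μ i) : 0 ≤ lamb μ K P 0 :=
  Finset.sum_nonneg fun j _ => mul_nonneg (hμ j).le (pEdge_nonneg _ _ _)

lemma pEdge_zero_le_lamb (hμ : ∀ i, 0 < μ i) (hsum : ∑ i, μ i = 1) (hK : Monotone K)
    (hP : ∀ j, K j ≤ P) : pEdge P (K 0) (K 0) ≤ lamb μ K P 0 := by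
  calc pEdge P (K 0) (K 0) = ∑ j, μ j * pEdge P (K 0) (K 0) := by
        rw [← Finset.sum_mul, hsum, one_mul]
    _ ≤ _ := Finset.sum_le_sum fun j _ =>
        mul_le_mul_of_nonneg_left (pEdge_mono _ (hK (Fin.zero_le j)) (hP j)) (hμ j).le

/-- The second moment over classes of `p_{1j}` is at most `λ₁² / μ_r`, because the largest
`p_{1j}` is `p_{1r} ≤ λ₁ / μ_r`. -/
lemma sum_sq_pEdge_le (hμ : ∀ i, 0 < μ i) (hK : Monotone K) (hP : ∀ j, K j ≤ P) :
    ∑ j, μ j * pEdge P (K 0) (K j) ^ 2 ≤ lamb μ K P 0 ^ 2 / μ (Fin.last r) := by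
  have h1 : μ (Fin.last r) * pEdge P (K 0) (K (Fin.last r)) ≤ lamb μ K P 0 :=
    Finset.single_le_sum (f := fun j => μ j * pEdge P (K 0) (K j))
      (fun j _ => mul_nonneg (hμ j).le (pEdge_nonneg _ _ _)) (Finset.mem_univ _)
  have h2 : ∑ j, μ j * pEdge P (K 0) (K j) ^ 2
      ≤ pEdge P (K 0) (K (Fin.last r)) * lamb μ K P 0 := by
    unfold lamb
    rw [Finset.mul_sum]
    refine Finset.sum_le_sum fun j _ => ?_
    have h3 := pEdge_mono (K 0) (hK (Fin.le_last j)) (hP (Fin.last r))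
    have h4 := mul_nonneg (hμ j).le (pEdge_nonneg P (K 0) (K j))
    nlinarith
  rw [le_div_iff₀ (hμ _)]
  nlinarith [lamb_nonneg (K := K) (P := P) hμ, hμ (Fin.last r)]

end Mean

/-! ### Integrating over the data of one vertex -/

/-- Indicator that two key rings are disjoint. -/
def avoid {P : ℕ} (S T : Finset (Fin P)) : ℝ := if Disjoint S T then 1 else 0

/-- Probability, over the channel only, that two vertices with rings `S`, `T` are not adjacent. -/
def nonadj {P : ℕ} (α : ℝ) (S T : Finset (Fin P)) : ℝ := 1 - α * (1 - avoid S T)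

/-- Indicator that a vertex has the first class. -/
def firstClass {r : ℕ} (i : Fin (r + 1)) : ℝ := if i = 0 then 1 else 0

lemma avoid_nonneg {P : ℕ} (S T : Finset (Fin P)) : 0 ≤ avoid S T := by
  unfold avoid; split_ifs <;> norm_num

lemma avoid_le_one {P : ℕ} (S T : Finset (Fin P)) : avoid S T ≤ 1 := by
  unfold avoid; split_ifs <;> norm_num

lemma sum_avoid {P : ℕ} (U : Finset (Fin P)) (k : ℕ) :
    ∑ T : Finset (Fin P), (if T.card = k then ((P.choose k : ℝ))⁻¹ else 0) * avoid U T
      = avoidProb P U.card k := by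
  have h1 : ∀ T : Finset (Fin P), (if T.card = k then ((P.choose k : ℝ))⁻¹ else 0) * avoid U T
      = if T ∈ Finset.powersetCard k Uᶜ then ((P.choose k : ℝ))⁻¹ else 0 := by
    intro T
    have : Disjoint U T ↔ T ⊆ Uᶜ := by rw [Finset.subset_compl_iff_disjoint_left]
    simp only [avoid, Finset.mem_powersetCard, this]
    by_cases h : T.card = k <;> by_cases h' : T ⊆ Uᶜ <;> simp [h, h']
  simp_rw [h1]
  rw [Finset.sum_ite_mem, Finset.univ_inter, Finset.sum_const, Finset.card_powersetCard,
    Finset.card_compl, Fintype.card_fin, nsmul_eq_mul]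
  rfl

section OneVertex

variable {r : ℕ} {μ : Fin (r + 1) → ℝ} {K : Fin (r + 1) → ℕ} {P : ℕ}

lemma vertexWt_nonneg (hμ : ∀ i, 0 < μ i) (v : Fin (r + 1) × Finset (Fin P)) :
    0 ≤ vertexWt μ K v := by
  unfold vertexWt
  refine mul_nonneg (hμ _).le ?_
  split_ifs <;> positivity

lemma sum_vertexWt_avoid (μ : Fin (r + 1) → ℝ) (K : Fin (r + 1) → ℕ) (χ : Fin (r + 1) → ℝ)
    (U : Finset (Fin P)) :
    ∑ v : Fin (r + 1) × Finset (Fin P), vertexWt μ K v * (χ v.1 * avoid U v.2)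
      = ∑ j, μ j * χ j * avoidProb P U.card (K j) := by
  rw [Fintype.sum_prod_type]
  refine Finset.sum_congr rfl fun j _ => ?_
  rw [← sum_avoid, Finset.mul_sum]
  refine Finset.sum_congr rfl fun T _ => ?_
  simp only [vertexWt]
  ring

lemma sum_vertexWt (hP : ∀ j, K j ≤ P) (χ : Fin (r + 1) → ℝ) :
    ∑ v : Fin (r + 1) × Finset (Fin P), vertexWt μ K v * χ v.1 = ∑ j, μ j * χ j := by
  have h := sum_vertexWt_avoid μ K χ (∅ : Finset (Fin P))
  simpa [avoid, avoidProb_zero (hP _)] using h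

lemma sum_vertexWt_one (hsum : ∑ i, μ i = 1) (hP : ∀ j, K j ≤ P) :
    ∑ v : Fin (r + 1) × Finset (Fin P), vertexWt μ K v = 1 := by
  have h := sum_vertexWt (μ := μ) hP (fun _ => 1)
  simpa [hsum] using h

lemma sum_vertexWt_first (hP : ∀ j, K j ≤ P) :
    ∑ v : Fin (r + 1) × Finset (Fin P), vertexWt μ K v * firstClass v.1 = μ 0 := by
  rw [sum_vertexWt hP]
  simp [firstClass]

lemma sum_vertexWt_first_hit (hP : ∀ j, K j ≤ P) (S : Finset (Fin P)) (hS : S.card = K 0) :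
    ∑ v : Fin (r + 1) × Finset (Fin P), vertexWt μ K v * firstClass v.1 * (1 - avoid S v.2)
      = μ 0 * pEdge P (K 0) (K 0) := by
  have h1 := sum_vertexWt_first (μ := μ) hP
  have h2 := sum_vertexWt_avoid μ K firstClass S
  simp only [mul_sub, mul_one, Finset.sum_sub_distrib, h1, mul_assoc, h2]
  simp [firstClass, pEdge, hS, mul_sub]

lemma sum_vertexWt_hit (hsum : ∑ i, μ i = 1) (hP : ∀ j, K j ≤ P) (S : Finset (Fin P))
    (hS : S.card = K 0) :
    ∑ v : Fin (r + 1) × Finset (Fin P), vertexWt μ K v * (1 - avoid S v.2) = lamb μ K P 0 := by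
  have h1 := sum_vertexWt_one (μ := μ) hsum hP
  have h2 := sum_vertexWt_avoid μ K (fun _ => 1) S
  simp only [one_mul, mul_one] at h2
  simp only [mul_sub, mul_one, Finset.sum_sub_distrib, h1, h2, lamb, pEdge, hS, hsum]

lemma sum_vertexWt_nonadj (hsum : ∑ i, μ i = 1) (hP : ∀ j, K j ≤ P) (α : ℝ)
    (S : Finset (Fin P)) (hS : S.card = K 0) :
    ∑ v : Fin (r + 1) × Finset (Fin P), vertexWt μ K v * nonadj α S v.2
      = 1 - α * lamb μ K P 0 := by
  have e : 1 - α * lamb μ K P 0 = ∑ v : Fin (r + 1) × Finset (Fin P), vertexWt μ K v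
      - α * (∑ v : Fin (r + 1) × Finset (Fin P), vertexWt μ K v * (1 - avoid S v.2)) := by
    rw [sum_vertexWt_hit hsum hP S hS, sum_vertexWt_one hsum hP]
  rw [e, Finset.mul_sum, ← Finset.sum_sub_distrib]
  refine Finset.sum_congr rfl fun v _ => ?_
  unfold nonadj
  ring

/-- Inclusion–exclusion for the event that a vertex is adjacent to neither of two given
first-class vertices. -/
lemma sum_vertexWt_nonadj_two (hsum : ∑ i, μ i = 1) (hP : ∀ j, K j ≤ P) (α : ℝ)
    (S T : Finset (Fin P)) (hS : S.card = K 0) (hT : T.card = K 0) :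
    ∑ v : Fin (r + 1) × Finset (Fin P), vertexWt μ K v * (nonadj α S v.2 * nonadj α T v.2)
      = 1 - 2 * (α * lamb μ K P 0) + α ^ 2 *
        ∑ v : Fin (r + 1) × Finset (Fin P),
          vertexWt μ K v * ((1 - avoid S v.2) * (1 - avoid T v.2)) := by
  have e : 1 - 2 * (α * lamb μ K P 0) = ∑ v : Fin (r + 1) × Finset (Fin P), vertexWt μ K v
      - α * (∑ v : Fin (r + 1) × Finset (Fin P), vertexWt μ K v * (1 - avoid S v.2))
      - α * (∑ v : Fin (r + 1) × Finset (Fin P), vertexWt μ K v * (1 - avoid T v.2)) := by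
    rw [sum_vertexWt_hit hsum hP S hS, sum_vertexWt_hit hsum hP T hT, sum_vertexWt_one hsum hP]
    ring
  rw [e, Finset.mul_sum, Finset.mul_sum, Finset.mul_sum, ← Finset.sum_sub_distrib,
    ← Finset.sum_sub_distrib, ← Finset.sum_add_distrib]
  refine Finset.sum_congr rfl fun v _ => ?_
  unfold nonadj
  ring

lemma sum_hit_hit_le (hμ : ∀ i, 0 < μ i) (hsum : ∑ i, μ i = 1) (hP : ∀ j, K j ≤ P)
    (S T : Finset (Fin P)) (hS : S.card = K 0) :
    ∑ v : Fin (r + 1) × Finset (Fin P), vertexWt μ K v * ((1 - avoid S v.2) * (1 - avoid T v.2))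
      ≤ lamb μ K P 0 := by
  rw [← sum_vertexWt_hit hsum hP S hS]
  refine Finset.sum_le_sum fun v _ => mul_le_mul_of_nonneg_left ?_ (vertexWt_nonneg hμ v)
  have h1 := avoid_nonneg T v.2
  have h2 := avoid_le_one S v.2
  nlinarith

lemma sum_hit_hit_le_of_disjoint (hμ : ∀ i, 0 < μ i) (hsum : ∑ i, μ i = 1) (hK : Monotone K)
    (hP : ∀ j, K j ≤ P)
    (S T : Finset (Fin P)) (hS : S.card = K 0) (hT : T.card = K 0) (hST : Disjoint S T) :
    ∑ v : Fin (r + 1) × Finset (Fin P), vertexWt μ K v * ((1 - avoid S v.2) * (1 - avoid T v.2))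
      ≤ lamb μ K P 0 ^ 2 / μ (Fin.last r) := by
  refine le_trans ?_ (sum_sq_pEdge_le hμ hK hP)
  have hU : (S ∪ T).card = 2 * K 0 := by
    rw [Finset.card_union_of_disjoint hST, hS, hT]; ring
  have h0 := sum_vertexWt_one (μ := μ) hsum hP
  have h1 := sum_vertexWt_avoid μ K (fun _ => 1) S
  have h2 := sum_vertexWt_avoid μ K (fun _ => 1) T
  have h3 := sum_vertexWt_avoid μ K (fun _ => 1) (S ∪ T)
  simp only [one_mul, mul_one, hS, hT, hU] at h1 h2 h3
  have h4 : ∑ v : Fin (r + 1) × Finset (Fin P),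
        vertexWt μ K v * ((1 - avoid S v.2) * (1 - avoid T v.2))
      = ∑ j, (μ j - μ j * avoidProb P (K 0) (K j) - μ j * avoidProb P (K 0) (K j)
        + μ j * avoidProb P (2 * K 0) (K j)) := by
    rw [Finset.sum_add_distrib, Finset.sum_sub_distrib, Finset.sum_sub_distrib,
      hsum.trans h0.symm, ← h3]
    nth_rewrite 1 [← h1]
    rw [← h2, ← Finset.sum_sub_distrib, ← Finset.sum_sub_distrib, ← Finset.sum_add_distrib]
    refine Finset.sum_congr rfl fun v _ => ?_
    have : avoid (S ∪ T) v.2 = avoid S v.2 * avoid T v.2 := by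
      simp only [avoid, Finset.disjoint_union_left]
      by_cases h : Disjoint S v.2 <;> by_cases h' : Disjoint T v.2 <;> simp [h, h']
    rw [this]
    ring
  rw [h4]
  refine Finset.sum_le_sum fun j _ => ?_
  have h5 := mul_le_mul_of_nonneg_left (avoidProb_two_mul_le (K 0) (hP j)) (hμ j).le
  unfold pEdge
  nlinarith

end OneVertex

/-! ### Moments of the number of isolated first-class vertices -/

section Moments

variable {n r P : ℕ} {μ : Fin (r + 1) → ℝ} {K : Fin (r + 1) → ℕ} {α : ℝ}

open Classical in
/-- Indicator that the vertex `x` has the first class and is isolated. -/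
noncomputable def isoInd (x : Fin n) (c : Config n r P) : ℝ :=
  firstClass (c.1 x) * (if Isolated c x then 1 else 0)

/-- The channels from `x` which must be off for `x` to be isolated, given the key rings. -/
def badEdge (ω : Fin n → Fin (r + 1) × Finset (Fin P)) (x : Fin n) (e : Sym2 (Fin n)) : Prop :=
  ∃ z, z ≠ x ∧ e = s(x, z) ∧ ¬ Disjoint (ω x).2 (ω z).2

lemma badEdge_not_isDiag {ω : Fin n → Fin (r + 1) × Finset (Fin P)} {x : Fin n}
    {e : Sym2 (Fin n)} (h : badEdge ω x e) : ¬ e.IsDiag := by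
  obtain ⟨z, hz, rfl, _⟩ := h
  simpa using hz.symm

lemma badEdge_mk {ω : Fin n → Fin (r + 1) × Finset (Fin P)} {x z : Fin n} (hz : z ≠ x) :
    badEdge ω x s(x, z) ↔ ¬ Disjoint (ω x).2 (ω z).2 := by
  constructor
  · rintro ⟨w, hw, he, hd⟩
    rw [Sym2.congr_right] at he
    rwa [he]
  · exact fun h => ⟨z, hz, rfl, h⟩

lemma isolated_toConfig (ω : Fin n → Fin (r + 1) × Finset (Fin P)) (B : Sym2 (Fin n) → Bool)
    (x : Fin n) : Isolated (toConfig ω B) x ↔ ∀ e, badEdge ω x e → B e = false := by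
  constructor
  · rintro h e ⟨z, hz, rfl, hd⟩
    by_contra hB
    exact h z ⟨hz.symm, Finset.not_disjoint_iff_nonempty_inter.1 hd, by simpa [toConfig] using hB⟩
  · rintro h z ⟨hz, hn, hB⟩
    have := h s(x, z) ⟨z, hz.symm, rfl, Finset.not_disjoint_iff_nonempty_inter.2 hn⟩
    simp [toConfig, this] at hB

open Classical in
lemma prod_badEdge (ω : Fin n → Fin (r + 1) × Finset (Fin P)) (x : Fin n) :
    (∏ e, if badEdge ω x e then 1 - α else 1)
      = ∏ z ∈ Finset.univ.erase x, nonadj α (ω x).2 (ω z).2 := by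
  have hinj : Set.InjOn (fun z => s(x, z)) (Finset.univ.erase x : Finset (Fin n)) :=
    fun a _ b _ h => Sym2.congr_right.1 h
  rw [← Finset.prod_subset (Finset.subset_univ ((Finset.univ.erase x).image fun z => s(x, z))),
    Finset.prod_image hinj]
  · refine Finset.prod_congr rfl fun z hz => ?_
    rw [badEdge_mk (Finset.ne_of_mem_erase hz)]
    by_cases h : Disjoint (ω x).2 (ω z).2 <;> simp [nonadj, avoid, h]
  · intro e _ he
    rw [if_neg]
    rintro ⟨z, hz, rfl, _⟩
    exact he (Finset.mem_image.2 ⟨z, by simp [hz], rfl⟩)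

open Classical in
/-- The channel between `x` and `y` is discarded, which only increases the product. -/
lemma prod_badEdge_two (hα0 : 0 ≤ α) (hα1 : α ≤ 1)
    (ω : Fin n → Fin (r + 1) × Finset (Fin P)) (x y : Fin n) (hxy : x ≠ y) :
    (∏ e, if badEdge ω x e ∨ badEdge ω y e then 1 - α else 1)
      ≤ ∏ z ∈ (Finset.univ.erase x).erase y,
        (nonadj α (ω x).2 (ω z).2 * nonadj α (ω y).2 (ω z).2) := by
  set A := (Finset.univ.erase x).erase y with hA
  have hmem : ∀ z ∈ A, z ≠ x ∧ z ≠ y := by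
    intro z hz
    simp only [hA, Finset.mem_erase] at hz
    exact ⟨hz.2.1, hz.1⟩
  have hinj : ∀ w : Fin n, Set.InjOn (fun z => s(w, z)) A :=
    fun w a _ b _ h => Sym2.congr_right.1 h
  have hdisj : Disjoint (A.image fun z => s(x, z)) (A.image fun z => s(y, z)) := by
    rw [Finset.disjoint_left]
    rintro e h1 h2
    obtain ⟨z, hz, rfl⟩ := Finset.mem_image.1 h1
    obtain ⟨w, hw, he⟩ := Finset.mem_image.1 h2
    rw [Sym2.eq_iff] at he
    rcases he with ⟨h, _⟩ | ⟨h, _⟩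
    · exact hxy h.symm
    · exact (hmem z hz).2 h.symm
  set f : Sym2 (Fin n) → ℝ := fun e => if badEdge ω x e ∨ badEdge ω y e then 1 - α else 1 with hf
  have hf0 : ∀ e, 0 ≤ f e := fun e => by simp only [hf]; split_ifs <;> linarith
  have hf1 : ∀ e, f e ≤ 1 := fun e => by simp only [hf]; split_ifs <;> linarith
  calc ∏ e, f e
      ≤ ∏ e ∈ (A.image fun z => s(x, z)) ∪ (A.image fun z => s(y, z)), f e :=
        Finset.prod_le_prod_of_subset_of_le_one (Finset.subset_univ _) (fun e _ => hf0 e)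
          (fun e _ _ => hf1 e)
    _ = ∏ z ∈ A, (f s(x, z) * f s(y, z)) := by
        rw [Finset.prod_union hdisj, Finset.prod_image (hinj x), Finset.prod_image (hinj y),
          Finset.prod_mul_distrib]
    _ ≤ _ := by
        refine Finset.prod_le_prod (fun z _ => mul_nonneg (hf0 _) (hf0 _)) fun z hz => ?_
        have key : ∀ w, z ≠ w → (w = x ∨ w = y) → f s(w, z) ≤ nonadj α (ω w).2 (ω z).2 := by
          intro w hw hwx
          by_cases h : Disjoint (ω w).2 (ω z).2
          · simpa [nonadj, avoid, h] using hf1 _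
          · have hb := (badEdge_mk (ω := ω) hw).2 h
            have : badEdge ω x s(w, z) ∨ badEdge ω y s(w, z) := by
              rcases hwx with rfl | rfl
              · exact Or.inl hb
              · exact Or.inr hb
            simp [hf, this, nonadj, avoid, h]
        have hx := key x (hmem z hz).1 (Or.inl rfl)
        have hy := key y (hmem z hz).2 (Or.inr rfl)
        exact mul_le_mul hx hy (hf0 _) ((hf0 _).trans hx)

lemma firstClass_nonneg (i : Fin (r + 1)) : 0 ≤ firstClass i := by
  unfold firstClass; split_ifs <;> norm_num

/-- A vertex of positive weight in the first class carries a ring of size `K 0`. -/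
lemma card_of_weight_ne_zero {v : Fin (r + 1) × Finset (Fin P)}
    (h : vertexWt μ K v * firstClass v.1 ≠ 0) : v.2.card = K 0 := by
  by_contra hne
  apply h
  by_cases h0 : v.1 = 0
  · simp [vertexWt, h0, hne]
  · simp [firstClass, h0]

lemma expect_one (hsum : ∑ i, μ i = 1) (hP : ∀ j, K j ≤ P) :
    expect μ K α (fun _ : Config n r P => 1) = 1 := by
  rw [expect_eq]
  have h := sum_channel (n := n) α (fun _ => False) (fun _ h => h.elim)
  simp only [false_imp_iff, implies_true, if_true, if_false, Finset.prod_const_one, mul_one] at h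
  simp only [h, mul_one]
  rw [← Fintype.prod_sum fun (_ : Fin n) v => vertexWt μ K v]
  simp [sum_vertexWt_one hsum hP]

lemma expect_isoInd (hsum : ∑ i, μ i = 1) (hP : ∀ j, K j ≤ P) (x : Fin n) :
    expect μ K α (isoInd (r := r) (P := P) x) = μ 0 * (1 - α * lamb μ K P 0) ^ (n - 1) := by
  classical
  have h1 : ∀ ω : Fin n → Fin (r + 1) × Finset (Fin P),
      (∏ z, vertexWt μ K (ω z)) *
        ∑ B : Sym2 (Fin n) → Bool, (∏ e, channelWt α e (B e)) * isoInd x (toConfig ω B)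
      = (vertexWt μ K (ω x) * firstClass (ω x).1) *
        ∏ z ∈ Finset.univ.erase x, (vertexWt μ K (ω z) * nonadj α (ω x).2 (ω z).2) := by
    intro ω
    have h2 : ∑ B : Sym2 (Fin n) → Bool, (∏ e, channelWt α e (B e)) * isoInd x (toConfig ω B)
        = firstClass (ω x).1 * ∏ z ∈ Finset.univ.erase x, nonadj α (ω x).2 (ω z).2 := by
      rw [← prod_badEdge, ← sum_channel α _ (fun e => badEdge_not_isDiag), Finset.mul_sum]
      refine Finset.sum_congr rfl fun B _ => ?_
      simp only [isoInd, isolated_toConfig]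
      simp only [toConfig]
      ring
    rw [h2, ← Finset.mul_prod_erase _ _ (Finset.mem_univ x), Finset.prod_mul_distrib]
    ring
  rw [expect_eq, Finset.sum_congr rfl fun ω _ => h1 ω,
    sum_pin_one x (fun a : Fin (r + 1) × Finset (Fin P) => vertexWt μ K a * firstClass a.1)
      (fun a b => vertexWt μ K b * nonadj α a.2 b.2)]
  rw [← sum_vertexWt_first (μ := μ) hP, Finset.sum_mul]
  refine Finset.sum_congr rfl fun a _ => ?_
  by_cases ha : vertexWt μ K a * firstClass a.1 = 0
  · simp [ha]
  · rw [sum_vertexWt_nonadj hsum hP α a.2 (card_of_weight_ne_zero ha)]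

/-- Joint isolation of two first-class vertices, split according to whether their key rings
are disjoint (probability `1 - p₁₁`) or not (probability `p₁₁`). -/
lemma expect_isoInd_mul_le (hμ : ∀ i, 0 < μ i) (hsum : ∑ i, μ i = 1) (hK : Monotone K)
    (hP : ∀ j, K j ≤ P) (hα0 : 0 ≤ α) (hα1 : α ≤ 1) (x y : Fin n) (hxy : x ≠ y) :
    expect μ K α (fun c : Config n r P => isoInd x c * isoInd y c) ≤
      μ 0 ^ 2 *
        ((1 - pEdge P (K 0) (K 0)) * (1 - 2 * (α * lamb μ K P 0) +
            (α * lamb μ K P 0) ^ 2 / μ (Fin.last r)) ^ (n - 2) +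
          pEdge P (K 0) (K 0) * (1 - 2 * (α * lamb μ K P 0) +
            α * (α * lamb μ K P 0)) ^ (n - 2)) := by
  classical
  set U := (1 - 2 * (α * lamb μ K P 0) + (α * lamb μ K P 0) ^ 2 / μ (Fin.last r)) ^ (n - 2) with hU
  set W := (1 - 2 * (α * lamb μ K P 0) + α * (α * lamb μ K P 0)) ^ (n - 2) with hW
  have hy : y ∈ Finset.univ.erase x := Finset.mem_erase.2 ⟨hxy.symm, Finset.mem_univ y⟩
  have h1 : ∀ ω : Fin n → Fin (r + 1) × Finset (Fin P),
      (∏ z, vertexWt μ K (ω z)) *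
        ∑ B : Sym2 (Fin n) → Bool, (∏ e, channelWt α e (B e)) *
          (isoInd x (toConfig ω B) * isoInd y (toConfig ω B))
      ≤ ((vertexWt μ K (ω x) * firstClass (ω x).1) * (vertexWt μ K (ω y) * firstClass (ω y).1)) *
        ∏ z ∈ (Finset.univ.erase x).erase y, (vertexWt μ K (ω z) *
          (nonadj α (ω x).2 (ω z).2 * nonadj α (ω y).2 (ω z).2)) := by
    intro ω
    have h2 : ∑ B : Sym2 (Fin n) → Bool, (∏ e, channelWt α e (B e)) *
          (isoInd x (toConfig ω B) * isoInd y (toConfig ω B))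
        = firstClass (ω x).1 * firstClass (ω y).1 *
          ∏ e, if badEdge ω x e ∨ badEdge ω y e then 1 - α else 1 := by
      have hc : (∏ e, if badEdge ω x e ∨ badEdge ω y e then 1 - α else 1)
          = ∑ B : Sym2 (Fin n) → Bool, (∏ e, channelWt α e (B e)) *
            (if ∀ e, badEdge ω x e ∨ badEdge ω y e → B e = false then 1 else 0) := by
        convert (sum_channel α (fun e => badEdge ω x e ∨ badEdge ω y e)
          (fun e h => Or.elim h badEdge_not_isDiag badEdge_not_isDiag)).symm
      rw [hc, Finset.mul_sum]
      refine Finset.sum_congr rfl fun B _ => ?_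
      have h3 : (if ∀ e, badEdge ω x e ∨ badEdge ω y e → B e = false then (1 : ℝ) else 0)
          = (if ∀ e, badEdge ω x e → B e = false then 1 else 0) *
            (if ∀ e, badEdge ω y e → B e = false then 1 else 0) := by
        rw [ite_zero_mul_ite_zero, mul_one]
        congr 1
        simp only [or_imp, forall_and]
      rw [h3]
      simp only [isoInd, isolated_toConfig]
      simp only [toConfig]
      ring
    rw [h2, ← Finset.mul_prod_erase _ _ (Finset.mem_univ x), ← Finset.mul_prod_erase _ _ hy,
      Finset.prod_mul_distrib]
    have h4 := prod_badEdge_two hα0 hα1 ω x y hxy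
    have h5 : 0 ≤ (vertexWt μ K (ω x) * firstClass (ω x).1) *
        (vertexWt μ K (ω y) * firstClass (ω y).1) *
        ∏ z ∈ (Finset.univ.erase x).erase y, vertexWt μ K (ω z) := by
      refine mul_nonneg (mul_nonneg (mul_nonneg ?_ ?_) (mul_nonneg ?_ ?_))
        (Finset.prod_nonneg fun z _ => ?_) <;>
        first
        | exact vertexWt_nonneg hμ _
        | exact firstClass_nonneg _
    have h6 := mul_le_mul_of_nonneg_left h4 h5
    refine le_trans (le_of_eq ?_) (h6.trans (le_of_eq ?_)) <;> ring
  rw [expect_eq]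
  refine (Finset.sum_le_sum fun ω _ => h1 ω).trans ?_
  rw [sum_pin_two x y hxy
    (fun a b : Fin (r + 1) × Finset (Fin P) =>
      (vertexWt μ K a * firstClass a.1) * (vertexWt μ K b * firstClass b.1))
    (fun a b v => vertexWt μ K v * (nonadj α a.2 v.2 * nonadj α b.2 v.2))]
  have hnn : ∀ v : Fin (r + 1) × Finset (Fin P), 0 ≤ vertexWt μ K v * firstClass v.1 :=
    fun v => mul_nonneg (vertexWt_nonneg hμ v) (firstClass_nonneg _)
  have hna : ∀ S T : Finset (Fin P), 0 ≤ nonadj α S T := by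
    intro S T
    have h1 := avoid_nonneg S T
    unfold nonadj
    nlinarith
  have h7 : ∀ a b : Fin (r + 1) × Finset (Fin P),
      (vertexWt μ K a * firstClass a.1) * (vertexWt μ K b * firstClass b.1) *
        (∑ v, vertexWt μ K v * (nonadj α a.2 v.2 * nonadj α b.2 v.2)) ^ (n - 2)
      ≤ (vertexWt μ K a * firstClass a.1) * (vertexWt μ K b * firstClass b.1 * U +
          vertexWt μ K b * firstClass b.1 * (1 - avoid a.2 b.2) * (W - U)) := by
    intro a b
    by_cases ha : vertexWt μ K a * firstClass a.1 = 0
    · simp [ha]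
    by_cases hb : vertexWt μ K b * firstClass b.1 = 0
    · simp [hb]
    have ca := card_of_weight_ne_zero ha
    have cb := card_of_weight_ne_zero hb
    have hpos : 0 ≤ ∑ v, vertexWt μ K v * (nonadj α a.2 v.2 * nonadj α b.2 v.2) :=
      Finset.sum_nonneg fun v _ =>
        mul_nonneg (vertexWt_nonneg hμ v) (mul_nonneg (hna _ _) (hna _ _))
    have h8 : (∑ v, vertexWt μ K v * (nonadj α a.2 v.2 * nonadj α b.2 v.2)) ^ (n - 2)
        ≤ U + (1 - avoid a.2 b.2) * (W - U) := by
      by_cases hd : Disjoint a.2 b.2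
      · simp only [avoid, hd, if_true, sub_self, zero_mul, add_zero]
        refine pow_le_pow_left₀ hpos ?_ _
        rw [sum_vertexWt_nonadj_two hsum hP α _ _ ca cb]
        have := mul_le_mul_of_nonneg_left
          (sum_hit_hit_le_of_disjoint hμ hsum hK hP _ _ ca cb hd) (sq_nonneg α)
        have e : α ^ 2 * (lamb μ K P 0 ^ 2 / μ (Fin.last r))
          = (α * lamb μ K P 0) ^ 2 / μ (Fin.last r) := by ring
        linarith
      · simp only [avoid, hd, if_false, sub_zero, one_mul, add_sub_cancel]
        refine pow_le_pow_left₀ hpos ?_ _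
        rw [sum_vertexWt_nonadj_two hsum hP α _ _ ca cb]
        have := mul_le_mul_of_nonneg_left
          (sum_hit_hit_le hμ hsum hP a.2 b.2 ca) (sq_nonneg α)
        nlinarith
    have h9 := mul_le_mul_of_nonneg_left h8 (mul_nonneg (hnn a) (hnn b))
    refine h9.trans (le_of_eq ?_)
    ring
  refine (Finset.sum_le_sum fun a _ => Finset.sum_le_sum fun b _ => h7 a b).trans (le_of_eq ?_)
  have h10 : ∀ a : Fin (r + 1) × Finset (Fin P),
      ∑ b : Fin (r + 1) × Finset (Fin P),
        (vertexWt μ K a * firstClass a.1) * (vertexWt μ K b * firstClass b.1 * U +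
          vertexWt μ K b * firstClass b.1 * (1 - avoid a.2 b.2) * (W - U))
      = (vertexWt μ K a * firstClass a.1) *
        (μ 0 * U + μ 0 * pEdge P (K 0) (K 0) * (W - U)) := by
    intro a
    by_cases ha : vertexWt μ K a * firstClass a.1 = 0
    · simp [ha]
    rw [← Finset.mul_sum, Finset.sum_add_distrib, ← Finset.sum_mul, ← Finset.sum_mul,
      sum_vertexWt_first hP, sum_vertexWt_first_hit hP _ (card_of_weight_ne_zero ha)]
  rw [Finset.sum_congr rfl fun a _ => h10 a, ← Finset.sum_mul, sum_vertexWt_first hP]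
  ring

lemma wt_nonneg (hμ : ∀ i, 0 < μ i) (hα0 : 0 ≤ α) (hα1 : α ≤ 1) (c : Config n r P) :
    0 ≤ wt μ K α c := by
  unfold wt
  refine mul_nonneg (mul_nonneg (Finset.prod_nonneg fun x _ => (hμ _).le)
    (Finset.prod_nonneg fun x _ => ?_)) (Finset.prod_nonneg fun e _ => ?_)
  · split_ifs <;> positivity
  · split_ifs <;> linarith

lemma isoInd_eq_zero_of_connected (hn : 2 ≤ n) (c : Config n r P) (h : (graphOf c).Connected)
    (x : Fin n) : isoInd x c = 0 := by
  have : Nontrivial (Fin n) := Fin.nontrivial_iff_two_le.2 hn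
  obtain ⟨y, hy⟩ := h.preconnected.exists_adj_of_nontrivial x
  have hn : ¬ Isolated c x := by
    intro hi
    rw [graphOf, SimpleGraph.fromRel_adj] at hy
    obtain ⟨hne, h1 | h1⟩ := hy
    · exact hi y ⟨hne, h1⟩
    · rw [Finset.inter_comm, Sym2.eq_swap] at h1
      exact hi y ⟨hne, h1⟩
  simp [isoInd, hn]

/-- Chebyshev's inequality for the number of isolated first-class vertices, which vanishes on
connected graphs. -/
lemma pr_connected_le (hμ : ∀ i, 0 < μ i) (hsum : ∑ i, μ i = 1) (hP : ∀ j, K j ≤ P)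
    (hα0 : 0 ≤ α) (hα1 : α ≤ 1) (hn : 2 ≤ n) (m M : ℝ)
    (hm : ∀ x : Fin n, expect μ K α (isoInd (r := r) (P := P) x) = m)
    (hM : ∀ x y : Fin n, x ≠ y →
      expect μ K α (fun c : Config n r P => isoInd x c * isoInd y c) ≤ M) :
    (n * m) ^ 2 * pr μ K α (fun c : Config n r P => (graphOf c).Connected)
      ≤ n * m + n * (n - 1) * M - (n * m) ^ 2 := by
  classical
  have h1 : (n * m) ^ 2 * pr μ K α (fun c : Config n r P => (graphOf c).Connected)
      ≤ ∑ c : Config n r P, wt μ K α c * ((∑ x, isoInd x c) - n * m) ^ 2 := by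
    unfold pr
    rw [Finset.mul_sum]
    refine Finset.sum_le_sum fun c _ => ?_
    split_ifs with h
    · simp [isoInd_eq_zero_of_connected hn c h, mul_comm]
    · simpa using mul_nonneg (wt_nonneg hμ hα0 hα1 c) (sq_nonneg _)
  have hsq : ∀ (x : Fin n) (c : Config n r P), isoInd x c * isoInd x c = isoInd x c := by
    intro x c
    unfold isoInd firstClass
    split_ifs <;> simp
  have hlin : ∑ c : Config n r P, wt μ K α c * (∑ x, isoInd x c) = n * m := by
    simp_rw [Finset.mul_sum]
    rw [Finset.sum_comm]
    simp only [expect] at hm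
    simp [hm]
  have hquad : ∑ c : Config n r P, wt μ K α c * (∑ x, isoInd x c) ^ 2
      ≤ n * m + n * (n - 1) * M := by
    have h2 : ∑ c : Config n r P, wt μ K α c * (∑ x, isoInd x c) ^ 2
        = ∑ x : Fin n, ∑ y : Fin n,
          expect μ K α (fun c : Config n r P => isoInd x c * isoInd y c) := by
      simp_rw [sq, Finset.sum_mul_sum, Finset.mul_sum, expect]
      rw [Finset.sum_comm]
      refine Finset.sum_congr rfl fun x _ => ?_
      rw [Finset.sum_comm]
    have h3 : ∀ x : Fin n, ∑ y : Fin n,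
        expect μ K α (fun c : Config n r P => isoInd x c * isoInd y c) ≤ m + (n - 1) * M := by
      intro x
      rw [← Finset.add_sum_erase _ _ (Finset.mem_univ x)]
      refine add_le_add (le_of_eq ?_) ?_
      · simp only [hsq]
        exact hm x
      · refine (Finset.sum_le_card_nsmul _ _ M fun y hy =>
          hM x y (Finset.ne_of_mem_erase hy).symm).trans (le_of_eq ?_)
        rw [Finset.card_erase_of_mem (Finset.mem_univ x), Finset.card_univ, Fintype.card_fin,
          nsmul_eq_mul, Nat.cast_sub (by omega), Nat.cast_one]
    rw [h2]
    refine (Finset.sum_le_card_nsmul _ _ _ fun x _ => h3 x).trans (le_of_eq ?_)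
    rw [Finset.card_univ, Fintype.card_fin, nsmul_eq_mul]
    ring
  have hone : ∑ c : Config n r P, wt μ K α c = 1 := by
    have := expect_one (n := n) (α := α) hsum hP
    simpa [expect] using this
  have h4 : ∑ c : Config n r P, wt μ K α c * ((∑ x, isoInd x c) - n * m) ^ 2
      = ∑ c : Config n r P, wt μ K α c * (∑ x, isoInd x c) ^ 2
        - 2 * (n * m) * ∑ c : Config n r P, wt μ K α c * (∑ x, isoInd x c)
        + (n * m) ^ 2 * ∑ c : Config n r P, wt μ K α c := by
    rw [Finset.mul_sum, Finset.mul_sum, ← Finset.sum_sub_distrib, ← Finset.sum_add_distrib]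
    exact Finset.sum_congr rfl fun c _ => by ring
  rw [h4, hlin, hone] at h1
  nlinarith

end Moments

/-! ### Asymptotics -/

/-- `(1 - 2Λ + δ)^(n-2)` compared with the squared isolation probability `(1 - Λ)^(2(n-1))`. -/
lemma pow_ratio_le {n : ℕ} (hn : 2 ≤ n) {L δ : ℝ} (hL : L ≤ 1 / 2) (hδ : 0 ≤ δ) :
    (1 - 2 * L + δ) ^ (n - 2)
      ≤ ((1 - L) ^ 2) ^ (n - 1) * (Real.exp (4 * (n * δ)) / (1 - L) ^ 2) := by
  obtain ⟨k, rfl⟩ := Nat.exists_eq_add_of_le' hn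
  have hD : 1 / 4 ≤ (1 - L) ^ 2 := by nlinarith
  have hD0 : 0 < (1 - L) ^ 2 := by linarith
  have h1 : 1 - 2 * L + δ ≤ (1 - L) ^ 2 * Real.exp (4 * δ) := by
    have := Real.add_one_le_exp (4 * δ)
    nlinarith [sq_nonneg L, mul_le_mul_of_nonneg_left this hD0.le, mul_nonneg hδ (sub_nonneg.2 hD)]
  have e1 : k + 2 - 2 = k := rfl
  have e2 : k + 2 - 1 = k + 1 := rfl
  rw [e1, e2]
  calc (1 - 2 * L + δ) ^ k ≤ ((1 - L) ^ 2 * Real.exp (4 * δ)) ^ k :=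
        pow_le_pow_left₀ (by linarith) h1 k
    _ = ((1 - L) ^ 2) ^ k * Real.exp (k * (4 * δ)) := by rw [mul_pow, Real.exp_nat_mul]
    _ ≤ ((1 - L) ^ 2) ^ k * Real.exp (4 * ((k + 2 : ℕ) * δ)) := by
        refine mul_le_mul_of_nonneg_left (Real.exp_le_exp.2 ?_) (by positivity)
        push_cast
        nlinarith
    _ = _ := by
        have hD1 := hD0.ne'
        rw [pow_succ ((1 - L) ^ 2) k, mul_assoc, mul_div_cancel₀ _ hD1]

/-- The pair correlation exceeds `1` by an error with three contributions: disjoint rings;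
intersecting rings with `α ℓ² ≤ 1`, where sharing keys barely correlates the two isolation events;
and intersecting rings with `α ℓ² > 1`, which are rare. Here `ℓ` stands for `log n`. -/
lemma pair_ratio_le {n : ℕ} (hn : 2 ≤ n) {L α p ρ ℓ : ℝ} (hL0 : 0 ≤ L) (hL : L ≤ 1 / 2)
    (hα0 : 0 < α) (hα1 : α ≤ 1) (hp0 : 0 ≤ p) (hp1 : p ≤ 1) (hρ : 0 < ρ) (hℓ : 0 < ℓ)
    (hpL : α * p ≤ L) (hnL : n * L ≤ ℓ) :
    (1 - p) * (1 - 2 * L + L ^ 2 / ρ) ^ (n - 2) + p * (1 - 2 * L + α * L) ^ (n - 2)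
      ≤ ((1 - L) ^ 2) ^ (n - 1) * (1 + ((Real.exp (4 * (n * (L ^ 2 / ρ))) / (1 - L) ^ 2 - 1)
        + (Real.exp (4 * ℓ⁻¹) / (1 - L) ^ 2 - 1) + ℓ ^ 3 * (((1 - L) ^ n)⁻¹ / n))) := by
  have hn0 : (0 : ℝ) < n := by positivity
  have hD0 : 0 < (1 - L) ^ 2 := by nlinarith
  have hD1 : (1 - L) ^ 2 ≤ 1 := by nlinarith
  have hQ : 0 < (1 - L) ^ n := pow_pos (by linarith) n
  set D := ((1 - L) ^ 2) ^ (n - 1) with hDdef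
  have hDpos : 0 < D := pow_pos hD0 _
  set E1 := Real.exp (4 * (n * (L ^ 2 / ρ))) / (1 - L) ^ 2 with hE1
  set E2 := Real.exp (4 * ℓ⁻¹) / (1 - L) ^ 2 with hE2
  have h1 : ∀ t : ℝ, 0 ≤ t → 1 ≤ Real.exp t / (1 - L) ^ 2 := by
    intro t ht
    rw [le_div_iff₀ hD0, one_mul]
    exact hD1.trans (Real.one_le_exp ht)
  have hE1' : 1 ≤ E1 := h1 _ (by positivity)
  have hE2' : 1 ≤ E2 := h1 _ (by positivity)
  have hU : (1 - 2 * L + L ^ 2 / ρ) ^ (n - 2) ≤ D * E1 := pow_ratio_le hn hL (by positivity)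
  have hU' : (1 - p) * (1 - 2 * L + L ^ 2 / ρ) ^ (n - 2) ≤ (1 - p) * (D * E1) :=
    mul_le_mul_of_nonneg_left hU (by linarith)
  have hR : 0 ≤ ℓ ^ 3 * (((1 - L) ^ n)⁻¹ / n) := by positivity
  by_cases hcase : α * ℓ ^ 2 ≤ 1
  · have hW : (1 - 2 * L + α * L) ^ (n - 2) ≤ D * E2 := by
      refine (pow_ratio_le hn hL (by positivity)).trans ?_
      refine mul_le_mul_of_nonneg_left ?_ hDpos.le
      rw [hE2]
      gcongr
      rw [← one_div, le_div_iff₀ hℓ]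
      calc n * (α * L) * ℓ = α * ℓ * (n * L) := by ring
        _ ≤ α * ℓ * ℓ := by gcongr
        _ = α * ℓ ^ 2 := by ring
        _ ≤ 1 := hcase
    have hW' := mul_le_mul_of_nonneg_left hW hp0
    have h2 : (1 - p) * E1 + p * E2 ≤ 1 + (E1 - 1 + (E2 - 1) + ℓ ^ 3 * (((1 - L) ^ n)⁻¹ / n)) := by
      nlinarith
    have h3 := mul_le_mul_of_nonneg_left h2 hDpos.le
    linarith
  · push Not at hcase
    have hW : (1 - 2 * L + α * L) ^ (n - 2) ≤ D * ((1 - L) ^ n)⁻¹ := by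
      have e : D * ((1 - L) ^ n)⁻¹ = (1 - L) ^ (n - 2) := by
        rw [← div_eq_mul_inv, div_eq_iff hQ.ne', hDdef, ← pow_mul, ← pow_add]
        congr 1
        omega
      rw [e]
      refine pow_le_pow_left₀ ?_ ?_ _ <;> nlinarith
    have hp : p ≤ ℓ ^ 3 / n := by
      rw [le_div_iff₀ hn0]
      calc p * n ≤ p * n * (α * ℓ ^ 2) := le_mul_of_one_le_right (by positivity) hcase.le
        _ = (α * p) * n * ℓ ^ 2 := by ring
        _ ≤ L * n * ℓ ^ 2 := by gcongr
        _ = (n * L) * ℓ ^ 2 := by ring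
        _ ≤ ℓ * ℓ ^ 2 := by gcongr
        _ = ℓ ^ 3 := by ring
    have hW' : p * (1 - 2 * L + α * L) ^ (n - 2) ≤ (ℓ ^ 3 / n) * (D * ((1 - L) ^ n)⁻¹) :=
      (mul_le_mul_of_nonneg_left hW hp0).trans
        (mul_le_mul_of_nonneg_right hp (by positivity))
    have h2 : (1 - p) * E1 ≤ 1 + (E1 - 1 + (E2 - 1)) := by nlinarith
    have h3 := mul_le_mul_of_nonneg_left h2 hDpos.le
    have e : (ℓ ^ 3 / n) * (D * ((1 - L) ^ n)⁻¹) = D * (ℓ ^ 3 * (((1 - L) ^ n)⁻¹ / n)) := by ring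
    rw [e] at hW'
    linarith

lemma inv_pow_le_exp {L : ℝ} (hL : L ≤ 1 / 2) (n : ℕ) :
    ((1 - L) ^ n)⁻¹ ≤ Real.exp (n * L) * Real.exp (2 * (n * L ^ 2)) := by
  have h1 : (1 - L)⁻¹ ≤ Real.exp (L + 2 * L ^ 2) := by
    refine le_trans ?_ (Real.add_one_le_exp _)
    rw [inv_le_iff_one_le_mul₀ (by linarith)]
    nlinarith [mul_nonneg (sq_nonneg L) (sub_nonneg.2 hL)]
  calc ((1 - L) ^ n)⁻¹ = ((1 - L)⁻¹) ^ n := (inv_pow _ _).symm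
    _ ≤ Real.exp (L + 2 * L ^ 2) ^ n :=
        pow_le_pow_left₀ (inv_nonneg.2 (by linarith)) h1 n
    _ = _ := by
        rw [← Real.exp_nat_mul, ← Real.exp_add]
        congr 1
        ring

/-- The non-asymptotic bound on the probability of connectivity. -/
lemma pr_connected_le_error {n r P : ℕ} {μ : Fin (r + 1) → ℝ} {K : Fin (r + 1) → ℕ} {α ℓ L : ℝ}
    (hμ : ∀ i, 0 < μ i) (hsum : ∑ i, μ i = 1) (hK : Monotone K) (hP : ∀ j, K j ≤ P)
    (hα0 : 0 < α) (hα1 : α ≤ 1) (hn : 2 ≤ n) (hℓ : 0 < ℓ) (hLdef : α * lamb μ K P 0 = L)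
    (hL : L ≤ 1 / 2) (hnL : n * L ≤ ℓ) :
    pr μ K α (fun c : Config n r P => (graphOf c).Connected)
      ≤ (μ 0)⁻¹ * (((1 - L) ^ n)⁻¹ / n) +
        ((Real.exp (4 * (n * (L ^ 2 / μ (Fin.last r)))) / (1 - L) ^ 2 - 1)
        + (Real.exp (4 * ℓ⁻¹) / (1 - L) ^ 2 - 1) + ℓ ^ 3 * (((1 - L) ^ n)⁻¹ / n)) := by
  have hn0 : (0 : ℝ) < n := by positivity
  have hL0 : 0 ≤ L := hLdef ▸ mul_nonneg hα0.le (lamb_nonneg hμ)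
  have hp := pEdge_zero_le_lamb hμ hsum hK hP
  set ε := (Real.exp (4 * (n * (L ^ 2 / μ (Fin.last r)))) / (1 - L) ^ 2 - 1)
    + (Real.exp (4 * ℓ⁻¹) / (1 - L) ^ 2 - 1) + ℓ ^ 3 * (((1 - L) ^ n)⁻¹ / n) with hε
  have h1 := pair_ratio_le hn hL0 hL hα0 hα1 (pEdge_nonneg P (K 0) (K 0))
    (pEdge_le_one P (K 0) (K 0)) (hμ (Fin.last r)) hℓ
    (by rw [← hLdef]; exact mul_le_mul_of_nonneg_left hp hα0.le) hnL
  set m := μ 0 * (1 - L) ^ (n - 1) with hm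
  have hm0 : 0 < m := mul_pos (hμ 0) (pow_pos (by linarith) _)
  have h2 := pr_connected_le (n := n) hμ hsum hP hα0.le hα1 hn m (m ^ 2 * (1 + ε))
    (fun x => by rw [expect_isoInd hsum hP, hLdef]) (fun x y hxy => by
      refine (expect_isoInd_mul_le hμ hsum hK hP hα0.le hα1 x y hxy).trans ?_
      rw [hLdef]
      refine (mul_le_mul_of_nonneg_left h1 (sq_nonneg _)).trans (le_of_eq ?_)
      rw [hm, mul_pow, ← pow_mul, ← pow_mul, mul_comm 2 (n - 1)]
      ring)
  have hM0 : 0 ≤ m ^ 2 * (1 + ε) := by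
    rcases (le_or_gt 0 (1 + ε)) with h | h
    · positivity
    · exfalso
      have hb : 0 < ((1 - L) ^ 2) ^ (n - 1) := pow_pos (by nlinarith) _
      have hc : 0 ≤ (1 - pEdge P (K 0) (K 0)) * (1 - 2 * L + L ^ 2 / μ (Fin.last r)) ^ (n - 2)
          + pEdge P (K 0) (K 0) * (1 - 2 * L + α * L) ^ (n - 2) := by
        have a1 := pEdge_le_one P (K 0) (K 0)
        have a2 := pEdge_nonneg P (K 0) (K 0)
        have a3 : 0 ≤ L ^ 2 / μ (Fin.last r) := div_nonneg (sq_nonneg _) (hμ _).le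
        have a4 : 0 ≤ α * L := by positivity
        refine add_nonneg (mul_nonneg (by linarith) (pow_nonneg (by linarith) _))
          (mul_nonneg a2 (pow_nonneg (by linarith) _))
      have := mul_neg_of_pos_of_neg hb h
      linarith
  have hnm : 0 < n * m := mul_pos hn0 hm0
  have h3 : (n * m) ^ 2 * pr μ K α (fun c : Config n r P => (graphOf c).Connected)
      ≤ (n * m) ^ 2 * ((n * m)⁻¹ + ε) := by
    have e : (n * m) ^ 2 * ((n * m)⁻¹ + ε) = n * m + (n * m) ^ 2 * ε := by
      field_simp
    rw [e]
    nlinarith [mul_nonneg hn0.le hM0]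
  have h4 := le_of_mul_le_mul_left h3 (by positivity)
  have h5 : (n * m)⁻¹ ≤ (μ 0)⁻¹ * (((1 - L) ^ n)⁻¹ / n) := by
    have e : (μ 0)⁻¹ * (((1 - L) ^ n)⁻¹ / n) = (n * (μ 0 * (1 - L) ^ n))⁻¹ := by
      rw [mul_inv, mul_inv]; ring
    rw [e, hm]
    have hq : 0 < (1 - L) ^ n := pow_pos (by linarith) _
    have hμ0 := hμ 0
    refine inv_anti₀ (by positivity) ?_
    have : (1 - L) ^ n ≤ (1 - L) ^ (n - 1) :=
      pow_le_pow_of_le_one (by linarith) (by linarith) (Nat.sub_le n 1)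
    gcongr
  linarith

/-! ### The zero law -/

/-- zero-law for connectivity:
under the scaling `Λ₁(n) = αₙ λ₁(n) = cₙ log n / n` with `cₙ → c < 1`, the probability
that `G(n; μ, Kₙ, Pₙ, αₙ)` is connected tends to `0`. -/
theorem connectivity_zero_law {r : ℕ} (μ : Fin (r + 1) → ℝ)
    (hμpos : ∀ i, 0 < μ i) (hμsum : ∑ i, μ i = 1)
    (K : ℕ → Fin (r + 1) → ℕ) (P : ℕ → ℕ) (α : ℕ → ℝ)
    (hK1 : ∀ n, 1 ≤ K n 0) (hKmono : ∀ n, Monotone (K n))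
    (hKP : ∀ n, 2 * K n (Fin.last r) ≤ P n)
    (hα : ∀ n, α n ∈ Set.Ioo (0 : ℝ) 1)
    (cseq : ℕ → ℝ) (c : ℝ)
    (hscal : ∀ n, 2 ≤ n → α n * lamb μ (K n) (P n) 0 = cseq n * Real.log n / n)
    (hc : Tendsto cseq atTop (nhds c)) (hclt : c < 1) :
    Tendsto (fun n => pr μ (K n) (α n) (fun cfg : Config n r (P n) => (graphOf cfg).Connected))
      atTop (nhds 0) := by
  classical
  obtain ⟨c', hcc', hc'1⟩ := exists_between hclt
  set L : ℕ → ℝ := fun n => α n * lamb μ (K n) (P n) 0 with hLdef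
  have hlog : Tendsto (fun n : ℕ => Real.log n) atTop atTop :=
    Real.tendsto_log_atTop.comp tendsto_natCast_atTop_atTop
  have hpow : ∀ (k : ℕ) (s : ℝ), 0 < s →
      Tendsto (fun n : ℕ => Real.log n ^ k / (n : ℝ) ^ s) atTop (nhds 0) := by
    intro k s hs
    have h := (isLittleO_log_rpow_rpow_atTop (k : ℝ) hs).tendsto_div_nhds_zero
    simpa only [Function.comp_def, Real.rpow_natCast] using h.comp tendsto_natCast_atTop_atTop
  have hL_lim : Tendsto L atTop (nhds 0) := by
    have h := hc.mul (hpow 1 1 one_pos)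
    rw [mul_zero] at h
    refine h.congr' ?_
    filter_upwards [eventually_ge_atTop 2] with n hn
    rw [hLdef]
    simp only
    rw [hscal n hn, pow_one, Real.rpow_one]
    ring
  have hL2_lim : Tendsto (fun n : ℕ => (n : ℝ) * L n ^ 2) atTop (nhds 0) := by
    have h := (hc.mul hc).mul (hpow 2 1 one_pos)
    rw [mul_zero] at h
    refine h.congr' ?_
    filter_upwards [eventually_ge_atTop 2] with n hn
    have hn0 : (n : ℝ) ≠ 0 := by positivity
    rw [hLdef]
    simp only
    rw [hscal n hn, Real.rpow_one]
    field_simp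
  have hL_half : ∀ᶠ n in atTop, L n ≤ 1 / 2 :=
    (hL_lim.eventually_lt_const (by norm_num : (0 : ℝ) < 1 / 2)).mono fun _ h => h.le
  have hnL : ∀ᶠ n : ℕ in atTop, n * L n ≤ c' * Real.log n := by
    filter_upwards [eventually_ge_atTop 2, hc.eventually_lt_const hcc',
      hlog.eventually_ge_atTop 0] with n hn hcn hl
    have hn0 : (n : ℝ) ≠ 0 := by positivity
    rw [hLdef]
    simp only
    rw [hscal n hn, mul_div_cancel₀ _ hn0]
    exact mul_le_mul_of_nonneg_right hcn.le hl
  -- `(1 - Λ)^(-n)` grows at most like `n^c'` with `c' < 1`, so it is beaten by `n / log^k n`.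
  have hQ_lim : ∀ k : ℕ,
      Tendsto (fun n : ℕ => Real.log n ^ k * (((1 - L n) ^ n)⁻¹ / n)) atTop (nhds 0) := by
    intro k
    have h := ((Real.continuous_exp.tendsto _).comp (hL2_lim.const_mul 2)).mul
      (hpow k (1 - c') (by linarith))
    rw [mul_zero] at h
    refine tendsto_of_tendsto_of_tendsto_of_le_of_le' tendsto_const_nhds h ?_ ?_
    · filter_upwards [hL_half, hlog.eventually_ge_atTop 0] with n hn hl
      have : 0 ≤ (1 - L n) ^ n := pow_nonneg (by linarith) _
      positivity
    · filter_upwards [hL_half, hlog.eventually_ge_atTop 0, hnL, eventually_ge_atTop 1]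
        with n hn hl hnl hn1
      have hn0 : (0 : ℝ) < n := by exact_mod_cast hn1
      have h1 : ((1 - L n) ^ n)⁻¹ ≤ (n : ℝ) ^ c' * Real.exp (2 * (n * L n ^ 2)) := by
        refine (inv_pow_le_exp hn n).trans ?_
        refine mul_le_mul_of_nonneg_right ?_ (Real.exp_pos _).le
        rw [Real.rpow_def_of_pos hn0, mul_comm (Real.log n)]
        exact Real.exp_le_exp.2 hnl
      calc Real.log n ^ k * (((1 - L n) ^ n)⁻¹ / n)
          ≤ Real.log n ^ k * (((n : ℝ) ^ c' * Real.exp (2 * (n * L n ^ 2))) / n) := by gcongr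
        _ = _ := by
            have hne : (n : ℝ) ^ c' ≠ 0 := (Real.rpow_pos_of_pos hn0 _).ne'
            simp only [Function.comp_apply]
            rw [Real.rpow_sub hn0, Real.rpow_one]
            field_simp
  have hD_lim : Tendsto (fun n => (1 - L n) ^ 2) atTop (nhds 1) := by
    have h := (hL_lim.const_sub 1).pow 2
    simpa using h
  have hE_lim : ∀ f : ℕ → ℝ, Tendsto f atTop (nhds 0) →
      Tendsto (fun n => Real.exp (4 * f n) / (1 - L n) ^ 2 - 1) atTop (nhds 0) := by
    intro f hf
    have h := (((Real.continuous_exp.tendsto _).comp (hf.const_mul 4)).div hD_lim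
      one_ne_zero).sub_const 1
    simpa using h
  have hE1 := hE_lim (fun n : ℕ => n * (L n ^ 2 / μ (Fin.last r))) (by
    have h := hL2_lim.div_const (μ (Fin.last r))
    simpa only [zero_div, mul_div_assoc] using h)
  have hE2 := hE_lim (fun n : ℕ => (Real.log n)⁻¹) hlog.inv_tendsto_atTop
  have hQ0 := (hQ_lim 0).const_mul (μ 0)⁻¹
  simp only [pow_zero, one_mul] at hQ0
  have hbound := hQ0.add ((hE1.add hE2).add (hQ_lim 3))
  simp only [mul_zero, add_zero] at hbound
  refine tendsto_of_tendsto_of_tendsto_of_le_of_le' tendsto_const_nhds hbound ?_ ?_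
  · refine Eventually.of_forall fun n => Finset.sum_nonneg fun cfg _ => ?_
    split_ifs
    · exact wt_nonneg hμpos (hα n).1.le (hα n).2.le cfg
    · exact le_rfl
  · filter_upwards [hL_half, hlog.eventually_gt_atTop 0, hnL, eventually_ge_atTop 2]
      with n hn hl hnl hn2
    have hP : ∀ j, K n j ≤ P n := fun j => by
      have h1 := hKmono n (Fin.le_last j)
      have h2 := hKP n
      omega
    exact pr_connected_le_error hμpos hμsum (hKmono n) hP (hα n).1 (hα n).2.le hn2 hl rfl hn
      (by nlinarith)
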